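/- arXiv:2105.05413 — 2 statements merged into one kernel-verified Lean document; each statement's English description precedes it below -/
import Mathlib

section
/- Let u_h⁰,…,u_hⁿ ∈ V_h be an implicit Euler Galerkin solution in V_h and u_H⁰,…,u_Hⁿ ∈ V_ms an implicit Euler Galerkin solution in V_ms, both for the form a, the same time step Δt > 0 and the same data f¹,…,fⁿ. Set θ^j = u_H^j − R_H u_h^j. Then for every j = 1,…,n one has ‖θ^j‖ ≤ ‖θ^{j−1}‖ + ‖(u_h^j − u_h^{j−1}) − R_H(u_h^j − u_h^{j−1})‖. -/
open RealInnerProductSpace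

/-!
By Galerkin orthogonality, replacing `u_h^j` by `R_H u_h^j` in the fine scheme leaves the form
term unchanged on `V_ms`; keeping the discrete time derivative moves the projection error into the
initial value of the step. Subtracting from the coarse scheme cancels the data, so `θ^j` is a
homogeneous implicit Euler step in `V_ms` started from `θ^{j−1} + ρ`, where `ρ` is the projection
error of the increment `u_h^j − u_h^{j−1}`. Implicit Euler steps are contractive.
-/

theorem norm_le_norm_of_norm_sq_le_re_inner {𝕜 E : Type*} [RCLike 𝕜] [SeminormedAddCommGroup E]
    [InnerProductSpace 𝕜 E] {x y : E} (h : ‖x‖ ^ 2 ≤ RCLike.re (inner 𝕜 x y)) : ‖x‖ ≤ ‖y‖ := by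
  have hmul : ‖x‖ * ‖x‖ ≤ ‖x‖ * ‖y‖ := by
    simpa only [sq] using h.trans (re_inner_le_norm x y)
  rcases (norm_nonneg x).eq_or_lt with hx | hx
  · exact hx ▸ norm_nonneg y
  · exact le_of_mul_le_mul_left hmul hx

section ImplicitEuler

variable {E : Type*} [SeminormedAddCommGroup E] [InnerProductSpace ℝ E]

/-- The Ritz (elliptic) projection property: `R` maps into `V`, and its error is `a`-orthogonal to
`V`. The form `a` may be nonsymmetric; the error is its first argument. -/
structure IsRitzProjection (a : E →ₗ[ℝ] E →ₗ[ℝ] ℝ) (V : Submodule ℝ E) (R : E →ₗ[ℝ] E) :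
    Prop where
  mem : ∀ u, R u ∈ V
  orthogonal : ∀ u, ∀ v ∈ V, a (u - R u) v = 0

/-- The variational equation of one implicit Euler Galerkin step from `u₀` to `u₁` with data `f`,
tested against `V`. Neither `u₀` nor `u₁` is required to lie in `V`. -/
def IsImplicitEulerStep (a : E →ₗ[ℝ] E →ₗ[ℝ] ℝ) (V : Submodule ℝ E) (Δt : ℝ) (f u₀ u₁ : E) :
    Prop :=
  ∀ v ∈ V, ⟪u₁ - u₀, v⟫ + Δt * a u₁ v = Δt * ⟪f, v⟫

namespace IsImplicitEulerStep

variable {a : E →ₗ[ℝ] E →ₗ[ℝ] ℝ} {V W : Submodule ℝ E} {Δt : ℝ} {f g u₀ u₁ w₀ w₁ : E}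

theorem mono (hVW : V ≤ W) (hu : IsImplicitEulerStep a W Δt f u₀ u₁) :
    IsImplicitEulerStep a V Δt f u₀ u₁ :=
  fun v hv ↦ hu v (hVW hv)

theorem sub (hu : IsImplicitEulerStep a V Δt f u₀ u₁) (hw : IsImplicitEulerStep a V Δt g w₀ w₁) :
    IsImplicitEulerStep a V Δt (f - g) (u₀ - w₀) (u₁ - w₁) := by
  intro v hv
  rw [sub_sub_sub_comm, inner_sub_left (u₁ - u₀), inner_sub_left f, map_sub,
    LinearMap.sub_apply]
  linear_combination hu v hv - hw v hv

theorem of_orthogonal_sub (hu : IsImplicitEulerStep a V Δt f u₀ u₁)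
    (horth : ∀ v ∈ V, a (u₁ - w₁) v = 0) :
    IsImplicitEulerStep a V Δt f (u₀ - (u₁ - w₁)) w₁ := by
  intro v hv
  have hform : a u₁ v = a w₁ v := by
    simpa only [map_sub, LinearMap.sub_apply, sub_eq_zero] using horth v hv
  have hincrement : w₁ - (u₀ - (u₁ - w₁)) = u₁ - u₀ := by abel
  rw [hincrement, ← hform]
  exact hu v hv

theorem norm_le (hu : IsImplicitEulerStep a V Δt f u₀ u₁) (hu₁ : u₁ ∈ V) (hΔt : 0 ≤ Δt)
    (ha : 0 ≤ a u₁ u₁) : ‖u₁‖ ≤ ‖u₀ + Δt • f‖ := by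
  refine norm_le_norm_of_norm_sq_le_re_inner (𝕜 := ℝ) ?_
  have henergy : ‖u₁‖ ^ 2 + Δt * a u₁ u₁ = ⟪u₁, u₀ + Δt • f⟫ := by
    have htest := hu u₁ hu₁
    rw [inner_sub_left, real_inner_self_eq_norm_sq] at htest
    rw [real_inner_comm, inner_add_left, real_inner_smul_left]
    linear_combination htest
  calc
    ‖u₁‖ ^ 2 ≤ ‖u₁‖ ^ 2 + Δt * a u₁ u₁ := le_add_of_nonneg_right (mul_nonneg hΔt ha)
    _ = ⟪u₁, u₀ + Δt • f⟫ := henergy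

theorem sub_ritzProjection {R : E →ₗ[ℝ] E} (hw : IsImplicitEulerStep a V Δt f w₀ w₁)
    (hu : IsImplicitEulerStep a V Δt f u₀ u₁) (hR : IsRitzProjection a V R) :
    IsImplicitEulerStep a V Δt 0 ((w₀ - R u₀) + ((u₁ - u₀) - R (u₁ - u₀))) (w₁ - R u₁) := by
  have hdiff := hw.sub (hu.of_orthogonal_sub (hR.orthogonal u₁))
  have hinitial : w₀ - (u₀ - (u₁ - R u₁)) = (w₀ - R u₀) + ((u₁ - u₀) - R (u₁ - u₀)) := by
    rw [map_sub]
    abel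
  rwa [sub_self, hinitial] at hdiff

end IsImplicitEulerStep

theorem theta_one_step_estimate_general {a : E →ₗ[ℝ] E →ₗ[ℝ] ℝ} {Vms Vh : Submodule ℝ E}
    {RH : E →ₗ[ℝ] E} {Δt : ℝ} {f uh₀ uh₁ uH₀ uH₁ : E} (hpsd : ∀ v ∈ Vms, 0 ≤ a v v)
    (hsub : Vms ≤ Vh) (hRH : IsRitzProjection a Vms RH) (hΔt : 0 ≤ Δt) (huH₁ : uH₁ ∈ Vms)
    (huh : IsImplicitEulerStep a Vh Δt f uh₀ uh₁) (huH : IsImplicitEulerStep a Vms Δt f uH₀ uH₁) :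
    ‖uH₁ - RH uh₁‖ ≤ ‖uH₀ - RH uh₀‖ + ‖(uh₁ - uh₀) - RH (uh₁ - uh₀)‖ := by
  have hθmem : uH₁ - RH uh₁ ∈ Vms := Vms.sub_mem huH₁ (hRH.mem uh₁)
  have hθstep := huH.sub_ritzProjection (huh.mono hsub) hRH
  calc
    ‖uH₁ - RH uh₁‖ ≤ ‖(uH₀ - RH uh₀) + ((uh₁ - uh₀) - RH (uh₁ - uh₀))‖ := by
      simpa only [smul_zero, add_zero] using hθstep.norm_le hθmem hΔt (hpsd _ hθmem)
    _ ≤ ‖uH₀ - RH uh₀‖ + ‖(uh₁ - uh₀) - RH (uh₁ - uh₀)‖ := norm_add_le _ _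

end ImplicitEuler

/-- One-step estimate for `θ^j = u_H^j − R_H u_h^j`:
`‖θ^j‖ ≤ ‖θ^{j−1}‖ + ‖(u_h^j − u_h^{j−1}) − R_H(u_h^j − u_h^{j−1})‖`. -/
theorem theta_one_step_estimate
    {E : Type*} [NormedAddCommGroup E] [InnerProductSpace ℝ E]
    (a : E →ₗ[ℝ] E →ₗ[ℝ] ℝ)
    (hsymm : ∀ u v : E, a u v = a v u)
    (hpsd : ∀ v : E, 0 ≤ a v v)
    (Vms Vh : Submodule ℝ E) (hsub : Vms ≤ Vh)
    (RH : E →ₗ[ℝ] E) (hRHmem : ∀ u : E, RH u ∈ Vms)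
    (hRitz : ∀ u : E, ∀ v ∈ Vms, a (u - RH u) v = 0)
    (n : ℕ) (uh uH f : ℕ → E) (Δt : ℝ) (hΔt : 0 < Δt)
    (huhmem : ∀ j ≤ n, uh j ∈ Vh)
    (huHmem : ∀ j ≤ n, uH j ∈ Vms)
    (hschemeh : ∀ j, 1 ≤ j → j ≤ n → ∀ v ∈ Vh,
      ⟪uh j - uh (j - 1), v⟫ + Δt * a (uh j) v = Δt * ⟪f j, v⟫)
    (hschemeH : ∀ j, 1 ≤ j → j ≤ n → ∀ v ∈ Vms,
      ⟪uH j - uH (j - 1), v⟫ + Δt * a (uH j) v = Δt * ⟪f j, v⟫) :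
    ∀ j, 1 ≤ j → j ≤ n →
      ‖uH j - RH (uh j)‖
        ≤ ‖uH (j - 1) - RH (uh (j - 1))‖
          + ‖(uh j - uh (j - 1)) - RH (uh j - uh (j - 1))‖ := by
  intro j h1 hn
  exact theta_one_step_estimate_general (fun v _ ↦ hpsd v) hsub ⟨hRHmem, hRitz⟩
    hΔt.le (huHmem j hn) (hschemeh j h1 hn) (hschemeH j h1 hn)
end

section
/- (Error between the multiscale and the POD implicit Euler solutions; the e₃ estimate.) Assume in addition the Poincaré inequality ‖v‖² ≤ Q·a(v,v) for all v ∈ E with a constant Q > 0. Let u_H⁰,…,u_Hⁿ ∈ V_ms be an implicit Euler Galerkin solution in V_ms and p_l⁰,…,p_lⁿ ∈ Q_l an implicit Euler Galerkin solution in Q_l, both for the form a, the same time step Δt > 0 and the same data f¹,…,fⁿ, with n ≥ 1 and initial condition p_l⁰ = S u_H⁰. Set d^j = u_H^j − S u_H^j and z^j = (S(u_H^j − u_H^{j−1}) − (u_H^j − u_H^{j−1}))/Δt, and assume Σ_{j=1}^{n} ‖d^j‖_a² + Q²·Σ_{j=1}^{n} ‖z^j‖_a² ≤ Λ for a constant Λ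 ≥ 0 (in the paper Λ = Σ_{p=l+1}^{M} λ_p, the sum of the discarded POD eigenvalues). Then ‖u_Hⁿ − p_lⁿ‖² ≤ 2·(Δt + Q)·Λ. -/
open RealInnerProductSpace Finset

/-!
Compare the multiscale solution `u` and the POD solution `p` through any sequence `w` in the POD
space, such as `S u`. Subtracting the two schemes, `θ = w - p` solves an implicit Euler scheme
driven by the defect `d = u - w` and its time difference quotient. Testing with `θ` itself and
polarizing `⟪θʲ - θʲ⁻¹, θʲ⟫` gives an energy estimate: Young's inequality, in `a` for the defect and
through Poincaré for the difference quotient, costs exactly the energy `2 a(θ, θ)` that the scheme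
dissipates. So `‖θⁿ‖²` grows only by `Δt` times the defect energies, while Poincaré bounds `‖dⁿ‖²`
by `Q` times the last of them.
-/

section

lemma le_add_sum_Icc_of_le_add {M : Type*} [AddCommMonoid M] [Preorder M] [AddRightMono M]
    {e b : ℕ → M} {n : ℕ} (h : ∀ j, 1 ≤ j → j ≤ n → e j ≤ e (j - 1) + b j) :
    e n ≤ e 0 + ∑ j ∈ Icc 1 n, b j := by
  induction n with
  | zero => simp
  | succ n ih =>
    calc e (n + 1) ≤ e n + b (n + 1) := h (n + 1) (by lia) le_rfl
      _ ≤ e 0 + ∑ j ∈ Icc 1 n, b j + b (n + 1) := by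
        gcongr
        exact ih fun j hj hjn => h j hj (by lia)
      _ = e 0 + ∑ j ∈ Icc 1 (n + 1), b j := by
        rw [sum_Icc_succ_top (by lia), add_assoc]

lemma neg_two_mul_apply_le_add {R M : Type*} [CommRing R] [PartialOrder R]
    [IsOrderedAddMonoid R] [AddCommGroup M] [Module R M] {a : LinearMap.BilinForm R M}
    (ha : a.IsPosSemidef) (x y : M) : -(2 * a x y) ≤ a x x + a y y := by
  rw [neg_le_iff_add_nonneg]
  calc 0 ≤ a (x + y) (x + y) := ha.nonneg (x + y)
    _ = a x x + a y y + 2 * a x y := by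
      simp only [map_add, LinearMap.add_apply, ha.isSymm.eq y x]
      ring

lemma norm_sub_sq_le_two_mul_add {E : Type*} [SeminormedAddCommGroup E] (x y z : E) :
    ‖x - z‖ ^ 2 ≤ 2 * (‖x - y‖ ^ 2 + ‖y - z‖ ^ 2) :=
  calc ‖x - z‖ ^ 2 ≤ (‖x - y‖ + ‖y - z‖) ^ 2 := by
        gcongr
        exact norm_sub_le_norm_sub_add_norm_sub x y z
    _ ≤ 2 * (‖x - y‖ ^ 2 + ‖y - z‖ ^ 2) := add_sq_le

variable {E : Type*} [SeminormedAddCommGroup E] [InnerProductSpace ℝ E]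

lemma norm_sq_le_norm_sq_add_two_mul_inner_sub (x y : E) :
    ‖x‖ ^ 2 ≤ ‖y‖ ^ 2 + 2 * ⟪x - y, x⟫ := by
  have h := norm_sub_sq_real x (x - y)
  rw [sub_sub_cancel, real_inner_comm] at h
  linarith [sq_nonneg ‖x - y‖]

/-- The Poincaré inequality with constant `Q` for the energy form `a`: the energy controls the
norm. -/
def SatisfiesPoincare (a : LinearMap.BilinForm ℝ E) (Q : ℝ) : Prop :=
  ∀ v, ‖v‖ ^ 2 ≤ Q * a v v

namespace SatisfiesPoincare

variable {a : LinearMap.BilinForm ℝ E} {Q : ℝ}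

lemma isNonneg (hP : SatisfiesPoincare a Q) (hQ : 0 < Q) : a.IsNonneg where
  nonneg v := nonneg_of_mul_nonneg_right ((sq_nonneg ‖v‖).trans (hP v)) hQ

lemma two_mul_inner_le (hP : SatisfiesPoincare a Q) (hQ : 0 < Q) (x y : E) :
    2 * ⟪x, y⟫ ≤ Q ^ 2 * a x x + a y y :=
  calc 2 * ⟪x, y⟫ ≤ 2 * ‖x‖ * ‖y‖ := by
        rw [mul_assoc]
        gcongr
        exact real_inner_le_norm x y
    _ ≤ Q * ‖x‖ ^ 2 + Q⁻¹ * ‖y‖ ^ 2 := two_mul_le_add_mul_sq hQ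
    _ ≤ Q * (Q * a x x) + Q⁻¹ * (Q * a y y) := by
        gcongr
        exacts [hP x, hP y]
    _ = Q ^ 2 * a x x + a y y := by field_simp

end SatisfiesPoincare

lemma norm_sq_le_of_implicitEuler_step {a : LinearMap.BilinForm ℝ E} (ha : a.IsSymm) {Q : ℝ}
    (hQ : 0 < Q) (hP : SatisfiesPoincare a Q) {τ : ℝ} (hτ : 0 ≤ τ) {θ θ' z d : E}
    (hθ : ⟪θ - θ', θ⟫ + τ * a θ θ = τ * (⟪z, θ⟫ - a d θ)) :
    ‖θ‖ ^ 2 ≤ ‖θ'‖ ^ 2 + τ * (a d d + Q ^ 2 * a z z) := by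
  have young_defect : -(2 * a d θ) ≤ a d d + a θ θ :=
    neg_two_mul_apply_le_add ⟨ha, hP.isNonneg hQ⟩ d θ
  have young_rate : 2 * ⟪z, θ⟫ ≤ Q ^ 2 * a z z + a θ θ := hP.two_mul_inner_le hQ z θ
  calc ‖θ‖ ^ 2 ≤ ‖θ'‖ ^ 2 + 2 * ⟪θ - θ', θ⟫ := norm_sq_le_norm_sq_add_two_mul_inner_sub θ θ'
    _ = ‖θ'‖ ^ 2 + τ * (2 * ⟪z, θ⟫ - 2 * a d θ - 2 * a θ θ) := by linear_combination 2 * hθ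
    _ ≤ ‖θ'‖ ^ 2 + τ * (a d d + Q ^ 2 * a z z) := by
      gcongr
      linarith

/-- The sequence `u` satisfies the first `n` steps of the implicit Euler scheme with time step `τ`
and data `f`, tested against `W`. Membership of `u` in `W` is not part of the notion, so that a
solution in a larger space also satisfies the scheme tested against a subspace. -/
def SatisfiesImplicitEuler (a : LinearMap.BilinForm ℝ E) (τ : ℝ) (f : ℕ → E) (n : ℕ)
    (W : Submodule ℝ E) (u : ℕ → E) : Prop :=
  ∀ j, 1 ≤ j → j ≤ n → ∀ v ∈ W, ⟪u j - u (j - 1), v⟫ + τ * a (u j) v = τ * ⟪f j, v⟫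

/-- The difference quotient in time of `w - u`, the sequence `zʲ` of the paper for `w = S u`. -/
noncomputable def defectRate (τ : ℝ) (u w : ℕ → E) (j : ℕ) : E :=
  τ⁻¹ • ((w j - w (j - 1)) - (u j - u (j - 1)))

/-- The energy of the defect `u - w` and of its difference quotient at time step `j`, the latter
weighted by the squared Poincaré constant. For `w = S u` it is the `j`-th term of the POD tail. -/
noncomputable def defectEnergy (a : LinearMap.BilinForm ℝ E) (Q τ : ℝ) (u w : ℕ → E) (j : ℕ) : ℝ :=
  a (u j - w j) (u j - w j) + Q ^ 2 * a (defectRate τ u w j) (defectRate τ u w j)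

variable {a : LinearMap.BilinForm ℝ E} {Q τ : ℝ} {f u p w : ℕ → E} {n : ℕ} {W : Submodule ℝ E}

namespace SatisfiesImplicitEuler

lemma mono {V : Submodule ℝ E} (hWV : W ≤ V) (hu : SatisfiesImplicitEuler a τ f n V u) :
    SatisfiesImplicitEuler a τ f n W u :=
  fun j hj hjn v hv => hu j hj hjn v (hWV hv)

lemma error_equation (hu : SatisfiesImplicitEuler a τ f n W u)
    (hp : SatisfiesImplicitEuler a τ f n W p) (hτ : τ ≠ 0) (w : ℕ → E) {j : ℕ} (hj : 1 ≤ j)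
    (hjn : j ≤ n) {v : E} (hv : v ∈ W) :
    ⟪(w j - p j) - (w (j - 1) - p (j - 1)), v⟫ + τ * a (w j - p j) v =
      τ * (⟪defectRate τ u w j, v⟫ - a (u j - w j) v) := by
  have rate : τ * ⟪defectRate τ u w j, v⟫ = ⟪(w j - w (j - 1)) - (u j - u (j - 1)), v⟫ := by
    rw [defectRate, real_inner_smul_left, mul_inv_cancel_left₀ hτ]
  have hu_j := hu j hj hjn v hv
  have hp_j := hp j hj hjn v hv
  rw [mul_sub, rate]
  simp only [inner_sub_left, map_sub, LinearMap.sub_apply] at hu_j hp_j ⊢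
  linear_combination hu_j - hp_j

lemma norm_sub_sq_le_add_sum_defectEnergy (hu : SatisfiesImplicitEuler a τ f n W u)
    (hp : SatisfiesImplicitEuler a τ f n W p) (ha : a.IsSymm) (hQ : 0 < Q)
    (hP : SatisfiesPoincare a Q) (hτ : 0 < τ) (hpW : ∀ j ≤ n, p j ∈ W) (hwW : ∀ j ≤ n, w j ∈ W) :
    ‖w n - p n‖ ^ 2 ≤ ‖w 0 - p 0‖ ^ 2 + τ * ∑ j ∈ Icc 1 n, defectEnergy a Q τ u w j := by
  rw [mul_sum]
  refine le_add_sum_Icc_of_le_add (e := fun j => ‖w j - p j‖ ^ 2) fun j hj hjn => ?_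
  have hθ : w j - p j ∈ W := W.sub_mem (hwW j hjn) (hpW j hjn)
  exact norm_sq_le_of_implicitEuler_step ha hQ hP hτ.le (hu.error_equation hp hτ.ne' w hj hjn hθ)

end SatisfiesImplicitEuler

lemma defectEnergy_nonneg (ha : a.IsNonneg) (j : ℕ) : 0 ≤ defectEnergy a Q τ u w j :=
  add_nonneg (ha.nonneg _) (mul_nonneg (sq_nonneg Q) (ha.nonneg _))

lemma SatisfiesPoincare.norm_sub_sq_le_sum_defectEnergy (hP : SatisfiesPoincare a Q) (hQ : 0 < Q)
    (hn : 1 ≤ n) : ‖u n - w n‖ ^ 2 ≤ Q * ∑ j ∈ Icc 1 n, defectEnergy a Q τ u w j := by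
  have ha := hP.isNonneg hQ
  calc ‖u n - w n‖ ^ 2 ≤ Q * a (u n - w n) (u n - w n) := hP (u n - w n)
    _ ≤ Q * defectEnergy a Q τ u w n := by
      gcongr
      exact le_add_of_nonneg_right (mul_nonneg (sq_nonneg Q) (ha.nonneg _))
    _ ≤ Q * ∑ j ∈ Icc 1 n, defectEnergy a Q τ u w j := by
      gcongr
      exact single_le_sum (fun j _ => defectEnergy_nonneg ha j) (right_mem_Icc.2 hn)

theorem multiscale_pod_error_estimate_general (ha : a.IsSymm) (hQ : 0 < Q)
    (hP : SatisfiesPoincare a Q) (hτ : 0 < τ) (hn : 1 ≤ n)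
    (hu : SatisfiesImplicitEuler a τ f n W u) (hp : SatisfiesImplicitEuler a τ f n W p)
    (hpW : ∀ j ≤ n, p j ∈ W) (hwW : ∀ j ≤ n, w j ∈ W) {Λ : ℝ}
    (hΛ : ∑ j ∈ Icc 1 n, defectEnergy a Q τ u w j ≤ Λ) :
    ‖u n - p n‖ ^ 2 ≤ 2 * ‖w 0 - p 0‖ ^ 2 + 2 * (τ + Q) * Λ := by
  have hdefect := hP.norm_sub_sq_le_sum_defectEnergy (u := u) (w := w) (τ := τ) hQ hn
  have hdiscrete := hu.norm_sub_sq_le_add_sum_defectEnergy hp ha hQ hP hτ hpW hwW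
  calc ‖u n - p n‖ ^ 2 ≤ 2 * (‖u n - w n‖ ^ 2 + ‖w n - p n‖ ^ 2) :=
        norm_sub_sq_le_two_mul_add (u n) (w n) (p n)
    _ ≤ 2 * (Q * Λ + (‖w 0 - p 0‖ ^ 2 + τ * Λ)) := by
        gcongr
        exacts [hdefect.trans (by gcongr), hdiscrete.trans (by gcongr)]
    _ = 2 * ‖w 0 - p 0‖ ^ 2 + 2 * (τ + Q) * Λ := by ring

end

/-- Error between the multiscale and the POD implicit Euler solutions
(the `e₃` estimate): if `p_l⁰ = S u_H⁰` and the POD tail bound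
`Σ‖d^j‖_a² + Q²·Σ‖z^j‖_a² ≤ Λ` holds, then `‖u_Hⁿ − p_lⁿ‖² ≤ 2·(Δt + Q)·Λ`. -/
theorem multiscale_pod_error_estimate
    {E : Type*} [NormedAddCommGroup E] [InnerProductSpace ℝ E]
    (a : E →ₗ[ℝ] E →ₗ[ℝ] ℝ)
    (hsymm : ∀ u v : E, a u v = a v u)
    (hpsd : ∀ v : E, 0 ≤ a v v)
    (Q : ℝ) (hQ : 0 < Q)
    (hpoin : ∀ v : E, ‖v‖ ^ 2 ≤ Q * a v v)
    (Ql Vms : Submodule ℝ E) (hsub : Ql ≤ Vms)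
    (S : E →ₗ[ℝ] E) (hSmem : ∀ x : E, S x ∈ Ql)
    (n : ℕ) (hn : 1 ≤ n) (uH pl f : ℕ → E) (Δt : ℝ) (hΔt : 0 < Δt)
    (huHmem : ∀ j ≤ n, uH j ∈ Vms)
    (hplmem : ∀ j ≤ n, pl j ∈ Ql)
    (hschemeH : ∀ j, 1 ≤ j → j ≤ n → ∀ v ∈ Vms,
      ⟪uH j - uH (j - 1), v⟫ + Δt * a (uH j) v = Δt * ⟪f j, v⟫)
    (hschemel : ∀ j, 1 ≤ j → j ≤ n → ∀ v ∈ Ql,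
      ⟪pl j - pl (j - 1), v⟫ + Δt * a (pl j) v = Δt * ⟪f j, v⟫)
    (hinit : pl 0 = S (uH 0))
    (Λ : ℝ) (hΛ : 0 ≤ Λ)
    (htail :
      ∑ j ∈ Icc 1 n,
          Real.sqrt (a (uH j - S (uH j)) (uH j - S (uH j))) ^ 2
        + Q ^ 2 * ∑ j ∈ Icc 1 n,
            Real.sqrt
              (a (Δt⁻¹ • (S (uH j - uH (j - 1)) - (uH j - uH (j - 1))))
                 (Δt⁻¹ • (S (uH j - uH (j - 1)) - (uH j - uH (j - 1))))) ^ 2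
        ≤ Λ) :
    ‖uH n - pl n‖ ^ 2 ≤ 2 * (Δt + Q) * Λ := by
  simp only [Real.sq_sqrt (hpsd _), map_sub S, mul_sum, ← sum_add_distrib] at htail
  simpa [hinit] using multiscale_pod_error_estimate_general ⟨hsymm⟩ hQ hpoin hΔt hn
    (SatisfiesImplicitEuler.mono hsub hschemeH) hschemel hplmem (fun j _ => hSmem (uH j)) htail
end
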